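/- Let G=(V,E) be a loopless multigraph with n = |V|, let 1 ≤ ℓ ≤ k−1 be integers, and let x ∈ P^f_con(G,k). If x(E) ≥ k·n/2 + k/(2ℓ), then (ℓ/k)·x ∈ P_cov(G,ℓ). -/

import Mathlib

/-!
Write `y = (ℓ/k) x`. The proof reduces the claim to Edmonds' matching polytope theorem by a gadget.

*The gadget.* Split every edge `e` into two half-edges, one at each end, and replace each vertex
`v` by `deg v - ℓ` copies. Consider involutions of this node set that may pair a half-edge with
the other half of its edge, pair a half-edge at `v` with a copy of `v`, or fix a copy. The edges
whose halves are paired with each other form an `ℓ`-edge-cover: the remaining half-edges at `v` are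
injected into the `deg v - ℓ` copies of `v`. The point `y` lifts to a symmetric doubly stochastic
matrix on the nodes (`gadgetMatrix`), so it suffices to write that matrix as a convex combination
of permutation matrices of involutions (`mem_convexHull_cover`).

*The matching theorem.* By `mem_convexHull_permMatrix`, this is possible as soon as for every odd
node set `U` the entries leaving `U` together with the diagonal entries on `U` sum to at least `1`.
Suppose the matrix is outside the hull and take a separating functional whose set of optimal
involutions is maximal (`exists_max_sep`); then a valid inequality tight at all optimal
involutions is tight at all involutions. Nonnegativity of the entries shows that every pair `u, v`
is matched by some optimal involution. If every two nodes can be fixed simultaneously by an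
optimal involution, the functional takes the same value at the matrix as at the identity, which is
absurd. Otherwise, as in Gallai's lemma, an exchange along an alternating path
(`exists_alternating_set`, `fixed_pair_trans`) shows that being impossible to fix simultaneously is
an equivalence relation, and a nontrivial class `K` is an odd set whose inequality is tight at all
optimal involutions but not at the identity.

*The odd-set condition.* Let `U` be an odd node set. If `U` contains some but not all copies of a
vertex `v`, the row sums at the copies of `v` already give `1`. Otherwise the copies in `U` are
those of a vertex set `S`. If `S` is a nonempty proper subset, `y(δ(S)) ≥ ℓ` and `y ≤ ℓ/k` give the
bound (`one_le_cut_sum`). If `S = ∅`, oddness forces `U` to separate the two halves of an edge. If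
`S` is everything, the bound is the total slack `2 y(E) - ℓ n ≥ 1`, which is where the lower bound
on `x(E)` enters.
-/

set_option linter.unusedSectionVars false

/-- The set of edges of the multigraph `ends` with exactly one endpoint in `S`. -/
def cut {V E : Type} [Fintype V] [Fintype E] [DecidableEq V]
    (ends : E → Sym2 V) (S : Finset V) : Finset E :=
  Finset.univ.filter fun e => ∃ u w : V, ends e = s(u, w) ∧ u ∈ S ∧ w ∉ S

/-- `I` is an `ℓ`-edge-cover of the multigraph with edge-endpoints map `ends`:
every vertex is incident to at least `ℓ` edges of `I`. -/
def IsEdgeCover {V E : Type} [DecidableEq V] (ends : E → Sym2 V)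
    (ℓ : ℕ) (I : Finset E) : Prop :=
  ∀ v : V, ℓ ≤ (I.filter fun e => v ∈ ends e).card

/-- The set of characteristic vectors of `ℓ`-edge-covers. -/
def coverVectors {V E : Type} [DecidableEq V] [DecidableEq E]
    (ends : E → Sym2 V) (ℓ : ℕ) : Set (E → ℝ) :=
  {χ | ∃ I : Finset E, IsEdgeCover ends ℓ I ∧ χ = fun e => if e ∈ I then (1 : ℝ) else 0}

/-! ### Separating functionals with many minimisers -/

/-- A point `y` outside the convex hull of a finite family `c` can be separated by a functional `φ`
with the following facet-like property: if `ψ ≥ β` is valid at `y` and on the family, and tight at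
every minimiser of `φ` on the family, then it is tight on the whole family. The functional is chosen
with an inclusion-maximal set of minimisers; if `ψ` violated the property, then subtracting from `φ`
a suitable multiple of `ψ` would create a new minimiser while keeping the old ones. -/
theorem exists_max_sep {X ι : Type*} [AddCommGroup X] [Module ℝ X] [TopologicalSpace X]
    [IsTopologicalAddGroup X] [ContinuousSMul ℝ X] [LocallyConvexSpace ℝ X] [T2Space X]
    [Finite ι] (c : ι → X) (y : X) (hy : y ∉ convexHull ℝ (Set.range c)) :
    ∃ φ : X →ₗ[ℝ] ℝ, (∀ i, φ y < φ (c i)) ∧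
      ∀ (ψ : X →ₗ[ℝ] ℝ) (β : ℝ), (∀ i, β ≤ ψ (c i)) → β ≤ ψ y →
        (∀ i, (∀ j, φ (c i) ≤ φ (c j)) → ψ (c i) = β) → ∀ i, ψ (c i) = β := by
  have hfin : (Set.range c).Finite := Set.finite_range c
  obtain ⟨φ₀, s, h1, h2⟩ := geometric_hahn_banach_point_closed (convex_convexHull ℝ (Set.range c))
    (hfin.isClosed_convexHull ℝ) hy
  let Opt : (X →ₗ[ℝ] ℝ) → Set ι := fun φ => {i | ∀ j, φ (c i) ≤ φ (c j)}
  let T : Set (Set ι) := Set.image Opt {φ | ∀ i, φ y < φ (c i)}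
  have hT : T.Nonempty := ⟨_, φ₀.toLinearMap, fun i =>
    h1.trans (h2 _ (subset_convexHull ℝ _ ⟨i, rfl⟩)), rfl⟩
  obtain ⟨M, ⟨⟨φ, hφ, rfl⟩, hmax⟩⟩ := (Set.toFinite T).exists_maximal hT
  refine ⟨φ, hφ, fun ψ β hβ hβy htight => ?_⟩
  by_contra! hne
  obtain ⟨j, hj⟩ := hne
  have : Nonempty ι := ⟨j⟩
  obtain ⟨i₀, hi₀⟩ := Finite.exists_min (fun i => φ (c i))
  obtain ⟨j₀, hj₀, hmin⟩ := Set.exists_min_image {i | ψ (c i) ≠ β}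
    (fun i => (φ (c i) - φ (c i₀)) / (ψ (c i) - β)) (Set.toFinite _) ⟨j, hj⟩
  have hpos : ∀ i, ψ (c i) ≠ β → 0 < ψ (c i) - β := fun i hi =>
    sub_pos.2 (lt_of_le_of_ne (hβ i) (Ne.symm hi))
  -- the largest tilt that keeps the old minimisers minimal; it makes `j₀` a minimiser as well
  set t := (φ (c j₀) - φ (c i₀)) / (ψ (c j₀) - β) with ht
  have ht0 : 0 ≤ t := div_nonneg (sub_nonneg.2 (hi₀ _)) (hpos _ hj₀).le
  have hval : ∀ i, (φ - t • ψ) (c i) = φ (c i) - t * ψ (c i) := fun i => by simp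
  have hlow : ∀ i, φ (c i₀) - t * β ≤ (φ - t • ψ) (c i) := by
    intro i
    rw [hval]
    by_cases hi : ψ (c i) = β
    · rw [hi]; linarith [hi₀ i]
    · have := hmin i hi
      rw [le_div_iff₀ (hpos i hi)] at this
      linarith
  -- the tilted functional `φ - t • ψ` still separates `y` from the family
  have hmem : Opt (φ - t • ψ) ∈ T := by
    refine ⟨_, fun i => lt_of_lt_of_le ?_ (hlow i), rfl⟩
    have := hφ i₀
    have h3 : t * β ≤ t * ψ y := mul_le_mul_of_nonneg_left hβy ht0
    simp only [LinearMap.sub_apply, LinearMap.smul_apply, smul_eq_mul]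
    linarith
  have hsub : Opt φ ≤ Opt (φ - t • ψ) := by
    intro i hi j
    refine le_trans ?_ (hlow j)
    rw [hval, htight i hi]
    linarith [hi i₀]
  have hj₀mem : j₀ ∈ Opt (φ - t • ψ) := by
    intro j
    refine le_trans ?_ (hlow j)
    have : t * (ψ (c j₀) - β) = φ (c j₀) - φ (c i₀) := div_mul_cancel₀ _ (hpos _ hj₀).ne'
    rw [hval]
    linarith
  exact hj₀ (htight j₀ (hmax hmem hsub hj₀mem))

/-! ### Exchanges between two involutions -/

/-- The alternating path of two involutions `f`, `g` started at a fixed point `t` of `g` ends at no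
more than one fixed point of `f`. Such a path is encoded as the orbit of `t` under the translation
`f ∘ g`, which is invariant under both `f` and `g`. -/
theorem exists_alternating_set {N : Type*} {f g : N → N} (hf : Function.Involutive f)
    (hg : Function.Involutive g) {t u v : N} (ht : g t = t) (hu : f u = u) (hv : f v = v)
    (huv : u ≠ v) :
    ∃ A : Set N, t ∈ A ∧ (∀ x, x ∈ A ↔ f x ∈ A) ∧ (∀ x, x ∈ A ↔ g x ∈ A) ∧ ¬(u ∈ A ∧ v ∈ A) := by
  let p := hf.toPerm
  let q := hg.toPerm
  have hp : p * p = 1 := Equiv.ext hf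
  have hq : q * q = 1 := Equiv.ext hg
  have hpi : p⁻¹ = p := inv_eq_of_mul_eq_one_left hp
  have hqi : q⁻¹ = q := inv_eq_of_mul_eq_one_left hq
  let h := p * q
  have hinv : h⁻¹ = q * p := by simp only [h, mul_inv_rev, hpi, hqi]
  have hqh : ∀ n : ℤ, q * h ^ n = h ^ (-n) * q := by
    intro n
    have h1 : q * h * q⁻¹ = h⁻¹ := by rw [hinv]; simp only [h]; group
    have h2 : q * h ^ n * q⁻¹ = h ^ (-n) := by rw [← conj_zpow, h1, inv_zpow']
    rw [← h2]; group
  have hgn : ∀ n : ℤ, g ((h ^ n) t) = (h ^ (-n)) t := by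
    intro n
    have := congrArg (fun r : Equiv.Perm N => r t) (hqh n)
    simp only [Equiv.Perm.mul_apply] at this
    change g _ = (h ^ (-n)) (g t) at this
    rwa [ht] at this
  have hpq : ∀ x, f x = h (g x) := by
    intro x
    change f x = f (g (g x))
    rw [hg]
  have hfn : ∀ n : ℤ, f ((h ^ n) t) = (h ^ (1 - n)) t := by
    intro n
    rw [hpq, hgn, sub_eq_add_neg, zpow_add, zpow_one]
    rfl
  let A : Set N := {x | ∃ n : ℤ, (h ^ n) t = x}
  have hfA : ∀ x, x ∈ A → f x ∈ A := by
    rintro _ ⟨n, rfl⟩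
    exact ⟨1 - n, (hfn n).symm⟩
  have hgA : ∀ x, x ∈ A → g x ∈ A := by
    rintro _ ⟨n, rfl⟩
    exact ⟨-n, (hgn n).symm⟩
  refine ⟨A, ⟨0, by simp⟩, fun x => ⟨hfA x, fun hx => ?_⟩, fun x => ⟨hgA x, fun hx => ?_⟩, ?_⟩
  · simpa [hf x] using hfA _ hx
  · simpa [hg x] using hgA _ hx
  rintro ⟨⟨n, hn⟩, ⟨m, hm⟩⟩
  have key : ∀ a b : ℤ, (h ^ a) t = (h ^ b) t → h ^ (a - b) ∈ MulAction.stabilizer (Equiv.Perm N) t := by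
    intro a b hab
    rw [MulAction.mem_stabilizer_iff, Equiv.Perm.smul_def, sub_eq_neg_add, zpow_add,
      Equiv.Perm.mul_apply, hab, ← Equiv.Perm.mul_apply, ← zpow_add]
    simp
  -- The translations by `2n - 1` and `2m - 1` fix `t`, hence so does the one by
  -- `m (2n - 1) - n (2m - 1) = n - m`, and the two fixed points of `f` coincide.
  have h1 := key n (1 - n) (by rw [← hfn, hn, hu])
  have h2 := key m (1 - m) (by rw [← hfn, hm, hv])
  have h3 : h ^ (n - m) ∈ MulAction.stabilizer (Equiv.Perm N) t := by
    have := mul_mem (zpow_mem h1 m) (zpow_mem h2 (-n))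
    rw [← zpow_mul, ← zpow_mul, ← zpow_add] at this
    convert this using 2
    ring
  apply huv
  rw [← hn, ← hm]
  rw [MulAction.mem_stabilizer_iff, Equiv.Perm.smul_def] at h3
  nth_rewrite 2 [← h3]
  rw [← Equiv.Perm.mul_apply, ← zpow_add]
  congr 2
  ring

/-- Involutions of `N`, viewed as perfect matchings of `N` in which a node may also be matched to
itself. -/
abbrev Invol (N : Type*) := {f : N → N // Function.Involutive f}

/-- The permutation matrix of an involution. -/
def permMatrix {N : Type*} [DecidableEq N] (f : Invol N) : N → N → ℝ :=
  fun u v => if f.1 u = v then 1 else 0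

/-- The value on `permMatrix f` of the linear functional with coefficient matrix `W`. Each pair
`u ≠ v` exchanged by `f` contributes both `W u v` and `W v u`. -/
def cost {N : Type*} [Fintype N] (W : N → N → ℝ) (f : Invol N) : ℝ := ∑ u, W u (f.1 u)

/-- `f` has minimum cost among all involutions. -/
def IsOpt {N : Type*} [Fintype N] (W : N → N → ℝ) (f : Invol N) : Prop :=
  ∀ g, cost W f ≤ cost W g

section
variable {N : Type*} [Fintype N] [DecidableEq N]

/-- The effect on the cost of replacing the pair `u, v` by two fixed points. -/
theorem cost_pair (W : N → N → ℝ) {f g : Invol N} {u v : N} (huv : u ≠ v)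
    (hf : f.1 u = v) (hgu : g.1 u = u) (hgv : g.1 v = v)
    (h : ∀ x, x ≠ u → x ≠ v → f.1 x = g.1 x) :
    cost W f + W u u + W v v = cost W g + W u v + W v u := by
  have hfv : f.1 v = u := by rw [← hf, f.2]
  have : cost W f - cost W g = (W u v - W u u) + (W v u - W v v) := by
    unfold cost
    rw [← Finset.sum_sub_distrib, Finset.sum_eq_add u v huv]
    · rw [hf, hfv, hgu, hgv]
    · intro x _ hx
      rw [h x hx.1 hx.2, sub_self]
    · simp
    · simp
  linarith

theorem exists_unmatch (f : Invol N) (u v : N) (huv : f.1 u = v) :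
    ∃ g : Invol N, g.1 u = u ∧ g.1 v = v ∧ ∀ x, x ≠ u → x ≠ v → f.1 x = g.1 x := by
  have hfv : f.1 v = u := by rw [← huv, f.2]
  refine ⟨⟨fun x => if x = u ∨ x = v then x else f.1 x, fun x => ?_⟩, by simp, by simp, ?_⟩
  · have := f.2 x
    grind
  · intro x h1 h2
    simp [h1, h2]

theorem exists_match (f : Invol N) (u v : N) (hu : f.1 u = u) (hv : f.1 v = v) :
    ∃ g : Invol N, g.1 u = v ∧ ∀ x, x ≠ u → x ≠ v → g.1 x = f.1 x := by
  refine ⟨⟨fun x => if x = u then v else if x = v then u else f.1 x, fun x => ?_⟩, by simp, ?_⟩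
  · have := f.2 x
    grind
  · intro x h1 h2
    simp [h1, h2]

/-- Following `g` on a set invariant under two optimal involutions `f`, `g`, and `f` elsewhere, is
again optimal. -/
theorem exists_exchange (W : N → N → ℝ) (f g : Invol N) (A : Set N)
    (hf : ∀ x, x ∈ A ↔ f.1 x ∈ A) (hg : ∀ x, x ∈ A ↔ g.1 x ∈ A)
    (hfo : IsOpt W f) (hgo : IsOpt W g) :
    ∃ f' : Invol N, IsOpt W f' ∧ (∀ x ∈ A, f'.1 x = g.1 x) ∧ ∀ x ∉ A, f'.1 x = f.1 x := by
  classical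
  have key : ∀ f g : Invol N, (∀ x, x ∈ A ↔ f.1 x ∈ A) → (∀ x, x ∈ A ↔ g.1 x ∈ A) →
      Function.Involutive fun x => if x ∈ A then g.1 x else f.1 x := by
    intro f g hf hg x
    have h1 := f.2 x
    have h2 := g.2 x
    by_cases hx : x ∈ A
    · simp [hx, (hg x).1 hx, h2]
    · simp [hx, mt (hf x).2 hx, h1]
  let f' : Invol N := ⟨_, key f g hf hg⟩
  let g' : Invol N := ⟨_, key g f hg hf⟩
  -- swapping the two involutions on `A` preserves the total cost
  have hsum : cost W f' + cost W g' = cost W f + cost W g := by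
    unfold cost
    rw [← Finset.sum_add_distrib, ← Finset.sum_add_distrib]
    refine Finset.sum_congr rfl fun x _ => ?_
    by_cases hx : x ∈ A
    · simp [f', g', hx, add_comm]
    · simp [f', g', hx]
  refine ⟨f', fun k => ?_, fun x hx => by simp [f', hx], fun x hx => by simp [f', hx]⟩
  linarith [hfo k, hgo g']

/-- The step of Gallai's lemma: suppose that every node is fixed by some optimal involution. If no
optimal involution fixes both `u` and `t`, and none fixes both `t` and `v`, then none fixes both
`u` and `v`. Stated contrapositively. -/
theorem fixed_pair_trans {W : N → N → ℝ} (hfix : ∀ t, ∃ g : Invol N, IsOpt W g ∧ g.1 t = t)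
    {u t v : N} (huv : u ≠ v) {f : Invol N} (hfo : IsOpt W f)
    (hu : f.1 u = u) (hv : f.1 v = v) :
    (∃ g : Invol N, IsOpt W g ∧ g.1 u = u ∧ g.1 t = t) ∨
      ∃ g : Invol N, IsOpt W g ∧ g.1 t = t ∧ g.1 v = v := by
  obtain ⟨g, hgo, hgt⟩ := hfix t
  obtain ⟨A, htA, hfA, hgA, hA⟩ := exists_alternating_set f.2 g.2 hgt hu hv huv
  obtain ⟨f', hf'o, h1, h2⟩ := exists_exchange W f g A hfA hgA hfo hgo
  have ht' : f'.1 t = t := (h1 t htA).trans hgt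
  by_cases huA : u ∈ A
  · have hvA : v ∉ A := fun h => hA ⟨huA, h⟩
    exact Or.inr ⟨f', hf'o, ht', (h2 v hvA).trans hv⟩
  · exact Or.inl ⟨f', hf'o, (h2 u huA).trans hu, ht'⟩

/-- If some optimal involution fixes both `u` and `v`, then separating the pair `u, v` in an optimal
involution `f` keeps it optimal: pairing `u` with `v` cannot lower an optimal cost. -/
theorem unmatch_isOpt {W : N → N → ℝ} {u v : N} (huv : u ≠ v) {k : Invol N} (hko : IsOpt W k)
    (hku : k.1 u = u) (hkv : k.1 v = v) {f g : Invol N} (hfo : IsOpt W f)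
    (hf : f.1 u = v) (hgu : g.1 u = u) (hgv : g.1 v = v)
    (h : ∀ x, x ≠ u → x ≠ v → f.1 x = g.1 x) : IsOpt W g := by
  obtain ⟨k', hk', hk'x⟩ := exists_match k u v hku hkv
  have h1 := cost_pair W huv hk' hku hkv hk'x
  have h2 := cost_pair W huv hf hgu hgv h
  intro j
  linarith [hko k', hfo j]

/-- The nodes of `K` that `f` fixes or maps outside `K`, that is, those not matched inside `K`. -/
def exits (K : Finset N) (f : Invol N) : Finset N := K.filter fun u => f.1 u = u ∨ f.1 u ∉ K

theorem exits_parity (K : Finset N) (f : Invol N) : (Odd (exits K f).card ↔ Odd K.card) := by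
  have h0 : ∑ u ∈ K.filter (fun u => ¬ (f.1 u = u ∨ f.1 u ∉ K)), (1 : ZMod 2) = 0 := by
    refine Finset.sum_involution (fun u _ => f.1 u) ?_ ?_ ?_ ?_
    · intros; decide
    · intro u hu _
      simp at hu; tauto
    · intro u hu
      simp only [Finset.mem_filter, not_or, not_not, f.2 u] at hu ⊢
      exact ⟨hu.2.2, fun h => hu.2.1 h.symm, hu.1⟩
    · intro u _
      exact f.2 u
  rw [Finset.sum_const, nsmul_one, ZMod.natCast_eq_zero_iff_even] at h0
  have := Finset.card_filter_add_card_filter_not (s := K) (fun u => f.1 u = u ∨ f.1 u ∉ K)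
  unfold exits
  rw [← this, Nat.odd_add]
  simp only [h0, iff_true]

theorem exits_sum (K : Finset N) (f : Invol N) :
    ∑ u ∈ K, (permMatrix f u u + ∑ v ∈ Kᶜ, permMatrix f u v) = (exits K f).card := by
  unfold exits
  rw [Finset.card_filter]
  push_cast
  refine Finset.sum_congr rfl fun u hu => ?_
  simp only [permMatrix, Finset.sum_ite_eq, Finset.mem_compl]
  by_cases h : f.1 u = u
  · simp [h, hu]
  · simp [h]

/-- A linear functional on matrices is given by its coefficients on the matrix units. -/
theorem linear_eq_sum (φ : (N → N → ℝ) →ₗ[ℝ] ℝ) (X : N → N → ℝ) :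
    φ X = ∑ u, ∑ v, X u v * φ (Pi.single u (Pi.single v 1)) := by
  have : X = ∑ u, ∑ v, X u v • (Pi.single u (Pi.single v 1) : N → N → ℝ) := by
    ext a b
    simp [Finset.sum_apply, Pi.single_apply, ite_apply]
  conv_lhs => rw [this]
  simp

/-! ### The matching polytope -/

/-- Edmonds' matching polytope theorem: a symmetric doubly stochastic matrix satisfying the odd-set
inequalities is a convex combination of permutation matrices of involutions. Diagonal entries on `U`
count towards the inequality of `U`, as fixed points are unmatched nodes. -/
theorem mem_convexHull_permMatrix (Z : N → N → ℝ) (hsymm : ∀ u v, Z u v = Z v u)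
    (hnn : ∀ u v, 0 ≤ Z u v) (hrow : ∀ u, ∑ v, Z u v = 1)
    (hodd : ∀ U : Finset N, Odd U.card → 1 ≤ ∑ u ∈ U, (Z u u + ∑ v ∈ Uᶜ, Z u v)) :
    Z ∈ convexHull ℝ (Set.range (permMatrix : Invol N → N → N → ℝ)) := by
  by_contra hZ
  obtain ⟨φ, hφ, hmax⟩ := exists_max_sep _ Z hZ
  set W : N → N → ℝ := fun u v => φ (Pi.single u (Pi.single v 1)) with hW
  have hcost : ∀ f : Invol N, φ (permMatrix f) = cost W f := by
    intro f
    rw [linear_eq_sum]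
    simp [permMatrix, cost, hW]
  have hφZ : φ Z = ∑ u, ∑ v, Z u v * W u v := linear_eq_sum φ Z
  simp only [hcost] at hmax hφ
  let e : Invol N := ⟨id, fun _ => rfl⟩
  -- otherwise the inequality `Z u v ≥ 0` would be tight at every optimal involution, hence at all
  have hpair : ∀ u v, ∃ f : Invol N, IsOpt W f ∧ f.1 u = v := by
    intro u v
    by_contra! hno
    have h := hmax (LinearMap.proj v ∘ₗ LinearMap.proj (φ := fun _ : N => N → ℝ) u) 0
      (fun f => by simp only [LinearMap.comp_apply, LinearMap.proj_apply, permMatrix]; positivity)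
      (hnn u v)
      (fun f hf => by simp [permMatrix, hno f hf])
    obtain ⟨f, hf, -⟩ := exists_match e u v rfl rfl
    have := h f
    simp [permMatrix, hf] at this
  have hfix : ∀ t, ∃ g : Invol N, IsOpt W g ∧ g.1 t = t := fun t => hpair t t
  by_cases hall : ∀ u v, u ≠ v → ∃ g : Invol N, IsOpt W g ∧ g.1 u = u ∧ g.1 v = v
  -- Here `W` is a sum of row and column potentials up to symmetrisation, so `φ Z` is the cost of
  -- the identity.
  · have hWW : ∀ u v, W u v + W v u = W u u + W v v := by
      intro u v
      by_cases huv : u = v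
      · rw [huv]
      obtain ⟨g, hgo, hgu, hgv⟩ := hall u v huv
      obtain ⟨f, hf, hfx⟩ := exists_match g u v hgu hgv
      obtain ⟨f', hf'o, hf'⟩ := hpair u v
      obtain ⟨g', hg'u, hg'v, hg'x⟩ := exists_unmatch f' u v hf'
      have h1 := cost_pair W huv hf hgu hgv hfx
      have h2 := cost_pair W huv hf' hg'u hg'v hg'x
      linarith [hgo f, hf'o g']
    have h1 : ∑ u, ∑ v, Z u v * W v u = φ Z := by
      rw [hφZ, Finset.sum_comm]
      simp only [hsymm]
    have h2 : ∑ u, ∑ v, Z u v * W u u = ∑ u, W u u := by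
      simp only [← Finset.sum_mul, hrow, one_mul]
    have h3 : ∑ u, ∑ v, Z u v * W v v = ∑ u, W u u := by
      rw [Finset.sum_comm]
      refine Finset.sum_congr rfl fun v _ => ?_
      rw [← Finset.sum_mul, Finset.sum_congr rfl fun u _ => hsymm u v, hrow, one_mul]
    have h4 : ∑ u, ∑ v, (Z u v * W u v + Z u v * W v u)
        = ∑ u, ∑ v, (Z u v * W u u + Z u v * W v v) := by
      simp only [← mul_add, hWW]
    simp only [Finset.sum_add_distrib, h1, h2, h3, ← hφZ] at h4
    have h5 : cost W e = ∑ u, W u u := rfl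
    linarith [hφ e]
  · push Not at hall
    obtain ⟨u, v, huv, hno⟩ := hall
    classical
    -- the class of `u` under the relation that no optimal involution fixes both nodes
    let K : Finset N :=
      Finset.univ.filter fun x => u = x ∨ ∀ g : Invol N, IsOpt W g → g.1 u = u → g.1 x ≠ x
    have huK : u ∈ K := by simp [K]
    have hvK : v ∈ K := by simp only [K, Finset.mem_filter_univ]; exact Or.inr hno
    have hR : ∀ a ∈ K, ∀ b ∈ K, a ≠ b → ∀ g : Invol N, IsOpt W g → g.1 a = a →
        g.1 b ≠ b := by
      intro a ha b hb hab g hgo hga hgb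
      simp only [K, Finset.mem_filter_univ] at ha hb
      rcases fixed_pair_trans hfix (t := u) hab hgo hga hgb with ⟨g', h1, h2, h3⟩ | ⟨g', h1, h2, h3⟩
      · rcases ha with rfl | ha
        · rcases hb with rfl | hb
          · exact hab rfl
          · exact hb g hgo hga hgb
        · exact ha g' h1 h3 h2
      · rcases hb with rfl | hb
        · rcases ha with rfl | ha
          · exact hab rfl
          · exact ha g hgo hgb hga
        · exact hb g' h1 h2 h3
    have hout : ∀ a ∈ K, ∀ b ∉ K, ∃ g : Invol N, IsOpt W g ∧ g.1 a = a ∧ g.1 b = b := by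
      intro a ha b hb
      simp only [K, Finset.mem_filter_univ, not_or] at ha hb
      obtain ⟨hub, hb⟩ := hb
      push Not at hb
      obtain ⟨g, hgo, hgu, hgb⟩ := hb
      rcases ha with rfl | ha
      · exact ⟨g, hgo, hgu, hgb⟩
      rcases fixed_pair_trans hfix (t := a) hub hgo hgu hgb with ⟨g', h1, h2, h3⟩ | h
      · exact absurd h3 (ha g' h1 h2)
      · exact h
    -- a node of `K` matched to the outside can be freed without disturbing the rest of `K`
    have hfree : ∀ f : Invol N, IsOpt W f → ∀ a ∈ exits K f, ∃ g : Invol N, IsOpt W g ∧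
        g.1 a = a ∧ ∀ b ∈ K, b ≠ a → g.1 b = f.1 b := by
      intro f hfo a ha
      simp only [exits, Finset.mem_filter] at ha
      obtain ⟨haK, hfa | hfa⟩ := ha
      · exact ⟨f, hfo, hfa, fun _ _ _ => rfl⟩
      obtain ⟨k, hko, hka, hkb⟩ := hout a haK _ hfa
      obtain ⟨g, hga, hgb, hgx⟩ := exists_unmatch f a _ rfl
      have hne : a ≠ f.1 a := fun h => hfa (h ▸ haK)
      refine ⟨g, unmatch_isOpt hne hko hka hkb hfo rfl hga hgb hgx, hga, fun b hb hba => ?_⟩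
      exact (hgx b hba fun h => hfa (h ▸ hb)).symm
    -- two exits could both be freed, contradicting the definition of `K`
    have hle : ∀ f : Invol N, IsOpt W f → (exits K f).card ≤ 1 := by
      intro f hfo
      by_contra! hlt
      obtain ⟨a, ha, b, hb, hab⟩ := Finset.one_lt_card.1 hlt
      have haK := (Finset.mem_filter.1 ha).1
      have hbK := (Finset.mem_filter.1 hb).1
      obtain ⟨g, hgo, hga, hgx⟩ := hfree f hfo a ha
      have hbg : b ∈ exits K g := by
        simp only [exits, Finset.mem_filter] at hb ⊢
        rwa [hgx b hbK hab.symm]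
      obtain ⟨g', hg'o, hg'b, hg'x⟩ := hfree g hgo b hbg
      exact hR a haK b hbK hab g' hg'o (by rw [hg'x a haK hab, hga]) hg'b
    have hK : Odd K.card := by
      obtain ⟨f, hfo, hfu⟩ := hfix u
      have h1 : u ∈ exits K f := Finset.mem_filter.2 ⟨huK, Or.inl hfu⟩
      have h2 : (exits K f).card = 1 :=
        le_antisymm (hle f hfo) (Finset.card_pos.2 ⟨u, h1⟩)
      rw [← exits_parity K f, h2]
      exact odd_one
    let ψ : (N → N → ℝ) →ₗ[ℝ] ℝ :=
      { toFun := fun X => ∑ u ∈ K, (X u u + ∑ v ∈ Kᶜ, X u v)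
        map_add' := fun X Y => by
          simp only [Pi.add_apply, Finset.sum_add_distrib]; ring
        map_smul' := fun r X => by
          simp only [Pi.smul_apply, smul_eq_mul, RingHom.id_apply, Finset.mul_sum, mul_add] }
    have hψ : ∀ f : Invol N, ψ (permMatrix f) = (exits K f).card := exits_sum K
    have hge : ∀ f : Invol N, 1 ≤ (exits K f).card := fun f => ((exits_parity K f).2 hK).pos
    have h := hmax ψ 1 (fun f => by rw [hψ]; exact_mod_cast hge f) (hodd K hK)
      (fun f hf => by rw [hψ]; exact_mod_cast le_antisymm (hle f hf) (hge f)) e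
    rw [hψ] at h
    have he : exits K e = K := Finset.filter_true_of_mem fun _ _ => Or.inl rfl
    rw [he] at h
    have h' : K.card = 1 := by exact_mod_cast h
    exact huv (Finset.card_le_one.1 h'.le u huK v hvK)
end

/-! ### The gadget -/

section
variable {V E : Type} [Fintype V] [Fintype E] [DecidableEq V] [DecidableEq E]

/-- The amount by which `y` exceeds the demand `ℓ` at the vertex `v`. Half-edges are pairs
`h = (e, β)`, and `inc h` is the end of the edge `e` at which the half-edge `h` lies. -/
noncomputable def slack (inc : E × Bool → V) (ℓ : ℕ) (y : E → ℝ) (v : V) : ℝ :=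
  ∑ h with inc h = v, y h.1 - ℓ

/-- The lift of `y` to the nodes of the gadget: `b v` copies of every vertex `v` (in the application
`b v = deg v - ℓ`), and the half-edges. The two halves of an edge `e` are joined with weight `y e`.
The remaining weight `1 - y e` of each half is spread evenly over the copies of its end, and a
copy of `v` keeps its missing weight, an even share of the slack at `v`, on the diagonal. -/
noncomputable def gadgetMatrix (inc : E × Bool → V) (ℓ : ℕ) (y : E → ℝ) (b : V → ℕ) :
    (Σ v, Fin (b v)) ⊕ E × Bool → (Σ v, Fin (b v)) ⊕ E × Bool → ℝ
  | .inl a, .inl a' => if a = a' then slack inc ℓ y a.1 / b a.1 else 0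
  | .inl a, .inr h => if inc h = a.1 then (1 - y h.1) / b a.1 else 0
  | .inr h, .inl a => if inc h = a.1 then (1 - y h.1) / b a.1 else 0
  | .inr h, .inr h' => if h' = (h.1, !h.2) then y h.1 else 0

variable {inc : E × Bool → V} {ℓ : ℕ} {y : E → ℝ} {b : V → ℕ}

theorem gadgetMatrix_symm (p q) :
    gadgetMatrix inc ℓ y b p q = gadgetMatrix inc ℓ y b q p := by
  rcases p with a | h <;> rcases q with a' | h'
  · by_cases h : a = a'
    · rw [h]
    · simp [gadgetMatrix, h, Ne.symm h]
  · rfl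
  · rfl
  · obtain ⟨e, β⟩ := h
    obtain ⟨e', β'⟩ := h'
    by_cases he : e = e'
    · subst he
      cases β <;> cases β' <;> simp [gadgetMatrix]
    · simp [gadgetMatrix, he, Ne.symm he]

theorem gadgetMatrix_nonneg (hy0 : ∀ e, 0 ≤ y e) (hy1 : ∀ e, y e ≤ 1)
    (hs : ∀ v, 0 ≤ slack inc ℓ y v) (p q) : 0 ≤ gadgetMatrix inc ℓ y b p q := by
  have h1 : ∀ e, 0 ≤ 1 - y e := fun e => sub_nonneg.2 (hy1 e)
  rcases p with a | h <;> rcases q with a' | h' <;> simp only [gadgetMatrix] <;> split_ifs <;>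
    first
    | exact le_rfl
    | exact hy0 _
    | exact div_nonneg (hs _) (Nat.cast_nonneg _)
    | exact div_nonneg (h1 _) (Nat.cast_nonneg _)

theorem sum_one_sub (hdeg : ∀ v, (Finset.univ.filter fun h => inc h = v).card = b v + ℓ) (v : V) :
    ∑ h with inc h = v, (1 - y h.1) = b v - slack inc ℓ y v := by
  rw [Finset.sum_sub_distrib, Finset.sum_const, nsmul_one, hdeg, slack]
  push_cast
  ring

/-- The row of a half-edge `h`, restricted to the copies of vertices and weighted by `σ`: only the
average of `σ` over the copies of the end of `h` matters. -/
theorem sum_copies (σ : (Σ v, Fin (b v)) → ℝ) (h : E × Bool) :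
    ∑ a, σ a * (if inc h = a.1 then (1 - y h.1) / b a.1 else 0)
      = (1 - y h.1) * ((∑ i, σ ⟨inc h, i⟩) / b (inc h)) := by
  rw [Fintype.sum_sigma, Finset.sum_eq_single (inc h)]
  · simp only [if_true, ← Finset.sum_mul]
    ring
  · intro v _ hv
    simp [hv.symm]
  · simp

theorem gadgetMatrix_row (hb : ∀ v, 0 < b v)
    (hdeg : ∀ v, (Finset.univ.filter fun h => inc h = v).card = b v + ℓ) (p) :
    ∑ q, gadgetMatrix inc ℓ y b p q = 1 := by
  rcases p with a | h
  · have hb' : (b a.1 : ℝ) ≠ 0 := by exact_mod_cast (hb _).ne'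
    rw [Fintype.sum_sum_type]
    simp only [gadgetMatrix, Finset.sum_ite_eq, Finset.mem_univ, if_true, ← Finset.sum_filter,
      ← Finset.sum_div, sum_one_sub hdeg]
    field_simp
    ring
  · have hb' : (b (inc h) : ℝ) ≠ 0 := by exact_mod_cast (hb _).ne'
    rw [Fintype.sum_sum_type]
    have := sum_copies (inc := inc) (y := y) (b := b) (fun _ => 1) h
    simp only [one_mul] at this
    simp only [gadgetMatrix, this, Finset.sum_ite_eq', Finset.mem_univ, if_true]
    simp [hb']

/-- The odd-set expression of the gadget, for `σ` the `0`-`1` indicator of a node set `U`. Only the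
fraction `γ v` of the copies of `v` that lie in `U` enters, and the expression splits into
contributions of the vertices and of the half-edges. -/
theorem gadget_cut (hb : ∀ v, 0 < b v) (σ : (Σ v, Fin (b v)) ⊕ E × Bool → ℝ)
    (hσ : ∀ p, σ p * σ p = σ p) (γ : V → ℝ) (hγ : ∀ v, γ v = (∑ i, σ (.inl ⟨v, i⟩)) / b v) :
    ∑ p, σ p * (gadgetMatrix inc ℓ y b p p + ∑ q, (1 - σ q) * gadgetMatrix inc ℓ y b p q)
    = ∑ v, γ v * slack inc ℓ y v
      + ∑ h, ((1 - y h.1) * (σ (.inr h) * (1 - γ (inc h)) + (1 - σ (.inr h)) * γ (inc h))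
        + σ (.inr h) * (1 - σ (.inr (h.1, !h.2))) * y h.1) := by
  have hb' : ∀ v, (b v : ℝ) ≠ 0 := fun v => by exact_mod_cast (hb _).ne'
  have h1 : ∑ v, γ v * slack inc ℓ y v = ∑ a : (Σ v, Fin (b v)), σ (.inl a) * (slack inc ℓ y a.1 / b a.1) := by
    rw [Fintype.sum_sigma]
    refine Finset.sum_congr rfl fun v _ => ?_
    rw [hγ, div_mul_eq_mul_div, mul_div_assoc, Finset.sum_mul]
  have h2 : ∀ h, ∑ a : (Σ v, Fin (b v)), σ (.inl a) * (if inc h = a.1 then (1 - y h.1) / b a.1 else 0)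
      = (1 - y h.1) * γ (inc h) := fun h => by rw [hγ]; exact sum_copies (fun a => σ (.inl a)) h
  have h3 : ∀ h, ∑ a : (Σ v, Fin (b v)), (1 - σ (.inl a)) * (if inc h = a.1 then (1 - y h.1) / b a.1 else 0)
      = (1 - y h.1) * (1 - γ (inc h)) := fun h => by
    rw [sum_copies (fun a => 1 - σ (.inl a)) h, hγ]
    simp [sub_div, hb']
  have h4 : ∑ a : (Σ v, Fin (b v)), σ (.inl a) *
      ∑ h, (1 - σ (.inr h)) * (if inc h = a.1 then (1 - y h.1) / b a.1 else 0)
      = ∑ h, (1 - σ (.inr h)) * ((1 - y h.1) * γ (inc h)) := by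
    simp only [← h2, Finset.mul_sum]
    rw [Finset.sum_comm]
    refine Finset.sum_congr rfl fun h _ => Finset.sum_congr rfl fun a _ => ?_
    ring
  have h5 : ∀ h : E × Bool, ¬ (h = (h.1, !h.2)) := by
    rintro ⟨e, β⟩
    cases β <;> simp
  have h6 : ∀ a (d r : ℝ), σ (.inl a) * (d + ((1 - σ (.inl a)) * d + r))
      = σ (.inl a) * d + σ (.inl a) * r := by
    intro a d r
    linear_combination (-d) * hσ (.inl a)
  have hA : ∀ a, ∑ q, (1 - σ q) * gadgetMatrix inc ℓ y b (.inl a) q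
      = (1 - σ (.inl a)) * (slack inc ℓ y a.1 / b a.1) +
        ∑ h, (1 - σ (.inr h)) * (if inc h = a.1 then (1 - y h.1) / b a.1 else 0) := by
    intro a
    simp only [Fintype.sum_sum_type, gadgetMatrix, mul_ite, mul_zero, Finset.sum_ite_eq,
      Finset.mem_univ, if_true]
  have hH : ∀ h, ∑ q, (1 - σ q) * gadgetMatrix inc ℓ y b (.inr h) q
      = (1 - y h.1) * (1 - γ (inc h)) + (1 - σ (.inr (h.1, !h.2))) * y h.1 := by
    intro h
    rw [Fintype.sum_sum_type, ← h3 h]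
    congr 1
    simp only [gadgetMatrix, mul_ite, mul_zero, Finset.sum_ite_eq', Finset.mem_univ, if_true]
  rw [Fintype.sum_sum_type]
  simp only [hA, hH]
  simp only [gadgetMatrix, if_true, h5, if_false, h6, Finset.sum_add_distrib, ← h1, h4, add_assoc]
  congr 1
  simp only [← Finset.sum_add_distrib]
  refine Finset.sum_congr rfl fun h _ => ?_
  ring

/-! ### The odd-set condition for the gadget -/

/-- The contribution of one edge of weight `z` to the odd-set expression when each vertex has all or
none of its copies in the set: `s₁`, `s₂` tell whether the copies of its two ends are in the set,
and `u₁`, `u₂` whether its two halves are. -/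
theorem edge_bound {z : ℝ} (hz1 : z ≤ 1) (s₁ s₂ u₁ u₂ : Prop) [Decidable s₁]
    [Decidable s₂] [Decidable u₁] [Decidable u₂] :
    ((s₁ ↔ s₂) → ¬ (u₁ ↔ u₂) → 1 ≤
      ((1 - z) * ((if u₁ then 1 else 0) * (1 - if s₁ then 1 else 0)
          + (1 - if u₁ then 1 else 0) * if s₁ then 1 else 0)
        + (if u₁ then 1 else 0) * (1 - if u₂ then 1 else 0) * z)
      + ((1 - z) * ((if u₂ then 1 else 0) * (1 - if s₂ then 1 else 0)
          + (1 - if u₂ then 1 else 0) * if s₂ then 1 else 0)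
        + (if u₂ then 1 else 0) * (1 - if u₁ then 1 else 0) * z)) ∧
    (¬ (s₁ ↔ s₂) → (if u₁ ↔ u₂ then 1 - z else z) ≤
      ((1 - z) * ((if u₁ then 1 else 0) * (1 - if s₁ then 1 else 0)
          + (1 - if u₁ then 1 else 0) * if s₁ then 1 else 0)
        + (if u₁ then 1 else 0) * (1 - if u₂ then 1 else 0) * z)
      + ((1 - z) * ((if u₂ then 1 else 0) * (1 - if s₂ then 1 else 0)
          + (1 - if u₂ then 1 else 0) * if s₂ then 1 else 0)
        + (if u₂ then 1 else 0) * (1 - if u₁ then 1 else 0) * z)) := by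
  by_cases h1 : s₁ <;> by_cases h2 : s₂ <;> by_cases h3 : u₁ <;> by_cases h4 : u₂ <;>
    simp [h1, h2, h3, h4] <;> linarith

/-- The odd-set condition holds for the gadget. In `hcut`, the set `F` stands for the edges that have
both or neither of their halves in `U`. -/
theorem one_le_gadget_cut (hb : ∀ v, 0 < b v)
    (hdeg : ∀ v, (Finset.univ.filter fun h => inc h = v).card = b v + ℓ)
    (hy0 : ∀ e, 0 ≤ y e) (hy1 : ∀ e, y e ≤ 1) (hs : ∀ v, 0 ≤ slack inc ℓ y v)
    (htot : 1 ≤ ∑ v, slack inc ℓ y v)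
    (hcut : ∀ S : Finset V, S.Nonempty → S ≠ Finset.univ → ∀ F : Finset E,
      1 ≤ ∑ e with ¬ (inc (e, true) ∈ S ↔ inc (e, false) ∈ S), if e ∈ F then 1 - y e else y e)
    (U : Finset ((Σ v, Fin (b v)) ⊕ E × Bool)) (hU : Odd U.card) :
    1 ≤ ∑ p ∈ U, (gadgetMatrix inc ℓ y b p p + ∑ q ∈ Uᶜ, gadgetMatrix inc ℓ y b p q) := by
  let σ : (Σ v, Fin (b v)) ⊕ E × Bool → ℝ := fun p => if p ∈ U then 1 else 0
  let c : V → ℕ := fun v => (Finset.univ.filter fun i : Fin (b v) => Sum.inl ⟨v, i⟩ ∈ U).card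
  let γ : V → ℝ := fun v => (c v : ℝ) / b v
  have hbpos : ∀ v, (0 : ℝ) < b v := fun v => by exact_mod_cast hb v
  have hc : ∀ v, c v ≤ b v := fun v => by
    simpa using Finset.card_filter_le (Finset.univ : Finset (Fin (b v))) (fun i => Sum.inl ⟨v, i⟩ ∈ U)
  have hγ0 : ∀ v, 0 ≤ γ v := fun v => by positivity
  have hγ1 : ∀ v, γ v ≤ 1 := fun v => by
    rw [div_le_one (hbpos v)]; exact_mod_cast hc v
  have hσ0 : ∀ p, 0 ≤ σ p := fun p => by simp only [σ]; split_ifs <;> norm_num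
  have hσ1 : ∀ p, σ p ≤ 1 := fun p => by simp only [σ]; split_ifs <;> norm_num
  have hQ := gadget_cut (inc := inc) (ℓ := ℓ) (y := y) hb σ (fun p => by simp [σ]) γ
    (fun v => by simp [γ, c, σ])
  have hQU : ∑ p ∈ U, (gadgetMatrix inc ℓ y b p p + ∑ q ∈ Uᶜ, gadgetMatrix inc ℓ y b p q)
      = ∑ p, σ p * (gadgetMatrix inc ℓ y b p p + ∑ q, (1 - σ q) * gadgetMatrix inc ℓ y b p q) := by
    have : ∀ q, 1 - σ q = if q ∈ Uᶜ then 1 else 0 := fun q => by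
      by_cases h : q ∈ U <;> simp [σ, h]
    simp only [this]
    simp only [σ, ite_mul, one_mul, zero_mul, Finset.sum_ite_mem, Finset.univ_inter]
  rw [hQU, hQ]
  have hA0 : ∀ v, 0 ≤ γ v * slack inc ℓ y v := fun v => mul_nonneg (hγ0 v) (hs v)
  have hB0 : ∀ h, 0 ≤ (1 - y h.1) * (σ (.inr h) * (1 - γ (inc h)) + (1 - σ (.inr h)) * γ (inc h)) :=
    fun h => mul_nonneg (sub_nonneg.2 (hy1 _)) (add_nonneg
      (mul_nonneg (hσ0 _) (sub_nonneg.2 (hγ1 _))) (mul_nonneg (sub_nonneg.2 (hσ1 _)) (hγ0 _)))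
  have hC0 : ∀ h : E × Bool, 0 ≤ σ (.inr h) * (1 - σ (.inr (h.1, !h.2))) * y h.1 :=
    fun h => mul_nonneg (mul_nonneg (hσ0 _) (sub_nonneg.2 (hσ1 _))) (hy0 _)
  by_cases hpart : ∃ v, 0 < c v ∧ c v < b v
  -- Some but not all copies of `v` lie in `U`: the slack at `v` and the half-edges at `v` then
  -- contribute at least `μ` times the row sum `b v`.
  · obtain ⟨v, hv0, hv1⟩ := hpart
    set μ := min (γ v) (1 - γ v) with hμ
    have hbμ : 1 ≤ b v * μ := by
      rw [hμ, mul_min_of_nonneg _ _ (hbpos v).le, le_min_iff]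
      have h1 : (b v : ℝ) * γ v = c v := by
        simp only [γ]; field_simp [(hbpos v).ne']
      have h2 : (1 : ℝ) ≤ c v := by exact_mod_cast hv0
      have h3 : (c v : ℝ) + 1 ≤ b v := by exact_mod_cast hv1
      constructor <;> linarith
    have h1 : μ * slack inc ℓ y v ≤ ∑ v, γ v * slack inc ℓ y v :=
      (mul_le_mul_of_nonneg_right (min_le_left _ _) (hs v)).trans
        (Finset.single_le_sum (fun v _ => hA0 v) (Finset.mem_univ v))
    have h2 : μ * (b v - slack inc ℓ y v) ≤ ∑ h, ((1 - y h.1) * (σ (.inr h) * (1 - γ (inc h)) + (1 - σ (.inr h)) * γ (inc h))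
        + σ (.inr h) * (1 - σ (.inr (h.1, !h.2))) * y h.1) := by
      rw [← sum_one_sub hdeg, Finset.mul_sum]
      refine (Finset.sum_le_sum fun h hh => ?_).trans
        (Finset.sum_le_sum_of_subset_of_nonneg (Finset.subset_univ _)
          fun h _ _ => add_nonneg (hB0 h) (hC0 h))
      have hh' : inc h = v := (Finset.mem_filter.1 hh).2
      have h3 : μ ≤ σ (.inr h) * (1 - γ (inc h)) + (1 - σ (.inr h)) * γ (inc h) := by
        rw [hh']
        by_cases hhU : Sum.inr h ∈ U
        · simp only [σ, hhU, if_true]; linarith [min_le_right (γ v) (1 - γ v)]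
        · simp only [σ, hhU, if_false]; linarith [min_le_left (γ v) (1 - γ v)]
      have := mul_le_mul_of_nonneg_left h3 (sub_nonneg.2 (hy1 h.1))
      linarith [hC0 h]
    linarith
  · push Not at hpart
    let S : Finset V := Finset.univ.filter fun v => 0 < c v
    have hγS : ∀ v, γ v = if v ∈ S then 1 else 0 := by
      intro v
      by_cases hv : 0 < c v
      · have : c v = b v := le_antisymm (hc v) (hpart v hv)
        simp [γ, S, this, hb v, (hb v).ne']
      · simp [S, γ, Nat.eq_zero_of_not_pos hv]
    -- the contribution of both halves of the edge `e`
    let q : E → ℝ := fun e => ∑ β : Bool,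
      ((1 - y e) * (σ (.inr (e, β)) * (1 - γ (inc (e, β))) + (1 - σ (.inr (e, β))) * γ (inc (e, β)))
        + σ (.inr (e, β)) * (1 - σ (.inr (e, !β))) * y e)
    have hq0 : ∀ e, 0 ≤ q e := fun e => Finset.sum_nonneg fun β _ =>
      add_nonneg (hB0 (e, β)) (hC0 (e, β))
    rw [Fintype.sum_prod_type]
    change 1 ≤ _ + ∑ e, q e
    have hA : 0 ≤ ∑ v, γ v * slack inc ℓ y v := Finset.sum_nonneg fun v _ => hA0 v
    -- an edge whose halves are separated by `U` but whose ends are not contributes `1`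
    by_cases hbad : ∃ e, (inc (e, true) ∈ S ↔ inc (e, false) ∈ S) ∧
        ¬ (Sum.inr (e, true) ∈ U ↔ Sum.inr (e, false) ∈ U)
    · obtain ⟨e, he1, he2⟩ := hbad
      have h1 : 1 ≤ q e := by
        simp only [q, Fintype.sum_bool, hγS, σ, Bool.not_true, Bool.not_false]
        exact (edge_bound (hy1 e) _ _ _ _).1 he1 he2
      linarith [Finset.single_le_sum (fun e _ => hq0 e) (Finset.mem_univ e)]
    push Not at hbad
    -- with no copies in `U` and no separated halves, `U` would be even
    by_cases hS0 : S = ∅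
    · exfalso
      have hc0 : ∀ v, c v = 0 := fun v => by
        have : v ∉ S := by simp [hS0]
        simpa [S] using this
      have hcard : U.card = ∑ e : E, ∑ β : Bool, if Sum.inr (e, β) ∈ U then 1 else 0 := by
        have h1 : U.card = ∑ p, if p ∈ U then 1 else 0 := by simp
        have h2 : ∀ v, ∑ i, (if (Sum.inl ⟨v, i⟩ : (Σ v, Fin (b v)) ⊕ E × Bool) ∈ U then 1 else 0) = 0 := by
          intro v
          rw [← Finset.card_filter]
          exact hc0 v
        rw [h1, Fintype.sum_sum_type, Fintype.sum_sigma, Fintype.sum_prod_type]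
        simp only [h2, Finset.sum_const_zero, zero_add]
      refine (Nat.not_even_iff_odd.2 hU) ?_
      rw [hcard]
      refine Finset.even_sum _ fun e _ => ?_
      have := hbad e (by simp [hS0])
      rw [Fintype.sum_bool]
      by_cases h : Sum.inr (e, true) ∈ U <;> simp_all
    by_cases hS1 : S = Finset.univ
    · have : ∑ v, γ v * slack inc ℓ y v = ∑ v, slack inc ℓ y v := by
        simp [hγS, hS1]
      linarith [Finset.sum_nonneg fun e (_ : e ∈ Finset.univ) => hq0 e]
    · have h1 := hcut S (Finset.nonempty_iff_ne_empty.2 hS0) hS1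
        (Finset.univ.filter fun e => Sum.inr (e, true) ∈ U ↔ Sum.inr (e, false) ∈ U)
      refine le_add_of_nonneg_of_le hA (h1.trans ?_)
      refine (Finset.sum_le_sum fun e he => ?_).trans
        (Finset.sum_le_sum_of_subset_of_nonneg (Finset.subset_univ _) fun e _ _ => hq0 e)
      have he' := (Finset.mem_filter.1 he).2
      simp only [q, Fintype.sum_bool, hγS, σ, Bool.not_true, Bool.not_false, Finset.mem_filter_univ]
      exact (edge_bound (hy1 e) _ _ _ _).2 he'

/-! ### From matchings of the gadget to edge covers -/

/-- A point whose gadget satisfies the odd-set condition is a convex combination of characteristic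
vectors of edge sets `I` with at least `ℓ` half-edges of `I` at every vertex. -/
theorem mem_convexHull_cover (hb : ∀ v, 0 < b v)
    (hdeg : ∀ v, (Finset.univ.filter fun h => inc h = v).card = b v + ℓ)
    (hy0 : ∀ e, 0 ≤ y e) (hy1 : ∀ e, y e ≤ 1) (hs : ∀ v, 0 ≤ slack inc ℓ y v)
    (htot : 1 ≤ ∑ v, slack inc ℓ y v)
    (hcut : ∀ S : Finset V, S.Nonempty → S ≠ Finset.univ → ∀ F : Finset E,
      1 ≤ ∑ e with ¬ (inc (e, true) ∈ S ↔ inc (e, false) ∈ S), if e ∈ F then 1 - y e else y e) :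
    y ∈ convexHull ℝ {χ : E → ℝ | ∃ I : Finset E,
      (∀ v, ℓ ≤ (Finset.univ.filter fun h : E × Bool => inc h = v ∧ h.1 ∈ I).card) ∧
      χ = fun e => if e ∈ I then 1 else 0} := by
  have hZ := mem_convexHull_permMatrix (gadgetMatrix inc ℓ y b) gadgetMatrix_symm
    (gadgetMatrix_nonneg hy0 hy1 hs) (gadgetMatrix_row hb hdeg)
    (one_le_gadget_cut hb hdeg hy0 hy1 hs htot hcut)
  obtain ⟨κ, _, w, z, hw0, hw1, hz, hsum⟩ := mem_convexHull_iff_exists_fintype.1 hZ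
  choose f hf using hz
  have hval : ∀ p q, gadgetMatrix inc ℓ y b p q = ∑ i, w i * permMatrix (f i) p q := by
    intro p q
    rw [← hsum]
    simp [Finset.sum_apply, hf]
  -- an involution of positive weight uses only pairs of positive weight
  have hsupp : ∀ i, w i ≠ 0 → ∀ p, gadgetMatrix inc ℓ y b p ((f i).1 p) ≠ 0 := by
    intro i hi p
    refine (lt_of_lt_of_le (lt_of_le_of_ne (hw0 i) (Ne.symm hi)) ?_).ne'
    rw [hval]
    refine le_trans ?_ (Finset.single_le_sum (fun j _ => mul_nonneg (hw0 j) ?_) (Finset.mem_univ i))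
    · simp [permMatrix]
    · simp only [permMatrix]; split_ifs <;> norm_num
  let I : κ → Finset E := fun i =>
    Finset.univ.filter fun e => (f i).1 (.inr (e, true)) = .inr (e, false)
  have hy : y = ∑ i with w i ≠ 0, w i • (fun e => if e ∈ I i then (1 : ℝ) else 0) := by
    have h1 : y = ∑ i, w i • (fun e => if e ∈ I i then (1 : ℝ) else 0) := by
      ext e
      have := hval (.inr (e, true)) (.inr (e, false))
      simp only [gadgetMatrix, Bool.not_true, if_true] at this
      rw [this]
      simp [Finset.sum_apply, permMatrix, I]
    refine h1.trans (Finset.sum_filter_of_ne (p := fun i => w i ≠ 0) fun i _ h hi => h ?_).symm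
    rw [hi, zero_smul]
  rw [hy]
  refine (convex_convexHull ℝ _).sum_mem (fun i _ => hw0 i) ?_ fun i hi => ?_
  · rw [Finset.sum_filter_ne_zero, hw1]
  refine subset_convexHull ℝ _ ⟨I i, fun v => ?_, rfl⟩
  have hsi := hsupp i (Finset.mem_filter.1 hi).2
  -- a half-edge of an edge outside `I i` is matched to a copy of its end
  have hmatch : ∀ h : E × Bool, h.1 ∉ I i → ∃ j, (f i).1 (.inr h) = .inl ⟨inc h, j⟩ := by
    intro h hhI
    have h1 := hsi (.inr h)
    rcases hfh : (f i).1 (.inr h) with ⟨v', j⟩ | h'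
    · rw [hfh] at h1
      simp only [gadgetMatrix, ne_eq, ite_eq_right_iff, Classical.not_imp] at h1
      obtain ⟨rfl, -⟩ := h1
      exact ⟨j, rfl⟩
    · exfalso
      rw [hfh] at h1
      simp only [gadgetMatrix, ne_eq, ite_eq_right_iff, Classical.not_imp] at h1
      obtain ⟨rfl, -⟩ := h1
      obtain ⟨e, β⟩ := h
      apply hhI
      simp only [I, Finset.mem_filter_univ]
      cases β
      · rw [← (f i).2 (.inr (e, false)), hfh]
        simp
      · simpa using hfh
  have hcard : (Finset.univ.filter fun h : E × Bool => inc h = v ∧ h.1 ∉ I i).card ≤ b v := by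
    have : ∀ h ∈ Finset.univ.filter (fun h : E × Bool => inc h = v ∧ h.1 ∉ I i),
        (f i).1 (.inr h) ∈ (Finset.univ : Finset (Fin (b v))).image
          fun j => (.inl ⟨v, j⟩ : (Σ v, Fin (b v)) ⊕ E × Bool) := by
      intro h hh
      obtain ⟨rfl, hhI⟩ := (Finset.mem_filter.1 hh).2
      obtain ⟨j, hj⟩ := hmatch h hhI
      rw [hj]
      exact Finset.mem_image_of_mem _ (Finset.mem_univ j)
    refine (Finset.card_le_card_of_injOn _ this ?_).trans (Finset.card_image_le.trans (by simp))
    intro h _ h' _ hhh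
    exact Sum.inr_injective ((f i).2.injective hhh)
  have htotal := Finset.card_filter_add_card_filter_not
    (s := Finset.univ.filter fun h : E × Bool => inc h = v) (fun h => h.1 ∈ I i)
  rw [Finset.filter_filter, Finset.filter_filter, hdeg] at htotal
  omega

end

/-- The cut condition: `y(C) ≥ ℓ` and `y ≤ ℓ/k` still give `1` after replacing `y` by `1 - y` on `F`.
With `m` edges of `C` in `F`, the sum is at least `m (1 - ℓ/k)` and at least `ℓ + m - 2 m ℓ/k`; use
the first when `m ≥ k` and the second otherwise. -/
theorem one_le_cut_sum {E : Type} [DecidableEq E] {k ℓ : ℕ} (hℓ : 1 ≤ ℓ) (hℓk : ℓ + 1 ≤ k) (y : E → ℝ)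
    (hy0 : ∀ e, 0 ≤ y e) (hyk : ∀ e, y e ≤ (ℓ : ℝ) / k) (C F : Finset E)
    (hC : (ℓ : ℝ) ≤ ∑ e ∈ C, y e) : 1 ≤ ∑ e ∈ C, if e ∈ F then 1 - y e else y e := by
  have hℓ' : (1 : ℝ) ≤ ℓ := by exact_mod_cast hℓ
  have hk' : (ℓ : ℝ) + 1 ≤ k := by exact_mod_cast hℓk
  have hk0 : (0 : ℝ) < k := by linarith
  rw [Finset.sum_ite, Finset.sum_sub_distrib, Finset.sum_const, nsmul_one]
  rw [← Finset.sum_filter_add_sum_filter_not C (· ∈ F)] at hC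
  set m : ℝ := ((C.filter (· ∈ F)).card : ℝ) with hm
  have hm0 : 0 ≤ m := Nat.cast_nonneg _
  have h0 : 0 ≤ ∑ e ∈ C with e ∉ F, y e := Finset.sum_nonneg fun e _ => hy0 e
  set r : ℝ := (ℓ : ℝ) / k with hr
  have hrk : r * k = ℓ := div_mul_cancel₀ _ hk0.ne'
  have h1 : ∑ e ∈ C with e ∈ F, y e ≤ m * r := by
    refine (Finset.sum_le_sum fun e _ => hyk e).trans ?_
    rw [Finset.sum_const, nsmul_eq_mul]
  have hr1 : 0 ≤ 1 - r := by
    have : r ≤ 1 := (div_le_one hk0).2 (by linarith)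
    linarith
  rcases le_total (k : ℝ) m with hkm | hkm
  · nlinarith [mul_le_mul_of_nonneg_right hkm hr1]
  -- `ℓ + m - 2 m ℓ / k` is affine in `m`, with values `ℓ` at `m = 0` and `k - ℓ` at `m = k`
  · have h2 : 1 ≤ ℓ + m - 2 * (m * r) := by
      have h3 : k * (ℓ + m - 2 * (m * r)) = ℓ * (k - m) + m * (k - ℓ) := by
        linear_combination (-2 * m) * hrk
      have h4 : k * 1 ≤ k * (ℓ + m - 2 * (m * r)) := by
        rw [h3]
        nlinarith [mul_nonneg (sub_nonneg.2 hkm) (sub_nonneg.2 hℓ'), mul_nonneg hm0 (sub_nonneg.2 hk')]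
      exact le_of_mul_le_mul_left h4 hk0
    linarith

/-! ### The theorem -/

/-- If `1 ≤ ℓ ≤ k - 1`, `x` lies in the fractional `k`-edge-connectivity polytope of a
loopless multigraph on `n` vertices, and `x(E) ≥ k·n/2 + k/(2ℓ)`, then `(ℓ/k)·x` lies
in the integral `ℓ`-edge-cover polytope. -/
theorem small_cover_fractional_large {V E : Type} [Fintype V] [Fintype E]
    [DecidableEq V] [DecidableEq E]
    (ends : E → Sym2 V) (hloopless : ∀ e, ¬ (ends e).IsDiag)
    (k ℓ : ℕ) (hℓ1 : 1 ≤ ℓ) (hℓk : ℓ ≤ k - 1)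
    (x : E → ℝ) (hx0 : ∀ e, 0 ≤ x e) (hx1 : ∀ e, x e ≤ 1)
    (hcon : ∀ S : Finset V, S.Nonempty → S ≠ Finset.univ →
      (k : ℝ) ≤ ∑ e ∈ cut ends S, x e)
    (hxE : (k : ℝ) * Fintype.card V / 2 + (k : ℝ) / (2 * ℓ) ≤ ∑ e : E, x e) :
    (fun e => (ℓ : ℝ) / k * x e) ∈ convexHull ℝ (coverVectors ends ℓ) := by
  have hℓk' : ℓ + 1 ≤ k := by omega
  have hℓR : (1 : ℝ) ≤ ℓ := by exact_mod_cast hℓ1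
  have hkR : (ℓ : ℝ) + 1 ≤ k := by exact_mod_cast hℓk'
  have hk0 : (0 : ℝ) < k := by linarith
  have hex : ∀ e, ∃ p : V × V, ends e = s(p.1, p.2) := fun e =>
    Sym2.ind (fun a b => ⟨(a, b), rfl⟩) (ends e)
  choose p hp using hex
  let inc : E × Bool → V := fun h => if h.2 then (p h.1).1 else (p h.1).2
  have hends : ∀ e, ends e = s(inc (e, true), inc (e, false)) := fun e => hp e
  have hne : ∀ e, inc (e, true) ≠ inc (e, false) := by
    intro e h
    apply hloopless e
    rw [hends e]
    exact h
  have hcutS : ∀ S : Finset V, cut ends S =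
      Finset.univ.filter fun e => ¬ (inc (e, true) ∈ S ↔ inc (e, false) ∈ S) := by
    intro S
    ext e
    simp only [cut, Finset.mem_filter_univ, hends e]
    constructor
    · rintro ⟨u, w, h, hu, hw⟩
      rcases Sym2.eq_iff.1 h with ⟨h1, h2⟩ | ⟨h1, h2⟩ <;> rw [h1, h2] <;> tauto
    · intro h
      by_cases h1 : inc (e, true) ∈ S
      · exact ⟨_, _, rfl, h1, by tauto⟩
      · exact ⟨_, _, Sym2.eq_swap, by tauto, h1⟩
  -- loops being excluded, the half-edges at `v` are the edges of `δ(v)`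
  have hstar : ∀ {M : Type} [AddCommMonoid M] (g : E → M) (v : V),
      ∑ h : E × Bool with inc h = v, g h.1 = ∑ e ∈ cut ends {v}, g e := by
    intro M _ g v
    rw [hcutS, Finset.sum_filter, Finset.sum_filter, Fintype.sum_prod_type]
    refine Finset.sum_congr rfl fun e _ => ?_
    have := hne e
    rw [Fintype.sum_bool]
    by_cases h1 : inc (e, true) = v <;> by_cases h2 : inc (e, false) = v <;> simp_all
  -- a graph with a single vertex has no edges, against the lower bound on `x(E)`
  have hV : ∀ v : V, ({v} : Finset V) ≠ Finset.univ := by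
    intro v hv
    have hsub : ∀ a : V, a = v := fun a => by
      have : a ∈ ({v} : Finset V) := hv ▸ Finset.mem_univ a
      simpa using this
    have : IsEmpty E := ⟨fun e => hne e ((hsub _).trans (hsub _).symm)⟩
    rw [Finset.univ_eq_empty, Finset.sum_empty] at hxE
    have : 0 < (k : ℝ) * Fintype.card V / 2 + (k : ℝ) / (2 * ℓ) := by positivity
    linarith
  let y : E → ℝ := fun e => (ℓ : ℝ) / k * x e
  have hr0 : 0 ≤ (ℓ : ℝ) / k := by positivity
  have hr1 : (ℓ : ℝ) / k ≤ 1 := (div_le_one hk0).2 (by linarith)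
  have hy0 : ∀ e, 0 ≤ y e := fun e => mul_nonneg hr0 (hx0 e)
  have hyk : ∀ e, y e ≤ (ℓ : ℝ) / k := fun e => mul_le_of_le_one_right hr0 (hx1 e)
  have hycut : ∀ S : Finset V, S.Nonempty → S ≠ Finset.univ →
      (ℓ : ℝ) ≤ ∑ e ∈ cut ends S, y e := by
    intro S h1 h2
    rw [← Finset.mul_sum]
    calc (ℓ : ℝ) = ℓ / k * k := by field_simp
      _ ≤ _ := mul_le_mul_of_nonneg_left (hcon S h1 h2) hr0
  have hdegk : ∀ v, k ≤ (Finset.univ.filter fun h => inc h = v).card := by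
    intro v
    rw [Finset.card_eq_sum_ones, hstar (fun _ => 1) v, ← Finset.card_eq_sum_ones]
    have h1 := hcon {v} (Finset.singleton_nonempty v) (hV v)
    have h2 : ∑ e ∈ cut ends {v}, x e ≤ ∑ e ∈ cut ends {v}, (1 : ℝ) :=
      Finset.sum_le_sum fun e _ => hx1 e
    rw [Finset.sum_const, nsmul_one] at h2
    exact_mod_cast h1.trans h2
  have hslack : ∀ v, 0 ≤ slack inc ℓ y v := by
    intro v
    rw [slack, hstar y v]
    linarith [hycut {v} (Finset.singleton_nonempty v) (hV v)]
  -- the lower bound on `x(E)` says exactly that the total slack is at least `1`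
  have htot : 1 ≤ ∑ v, slack inc ℓ y v := by
    have h1 : ∑ v, ∑ h : E × Bool with inc h = v, y h.1 = 2 * (ℓ / k * ∑ e, x e) := by
      rw [Finset.sum_fiberwise, Fintype.sum_prod_type]
      simp [y, Finset.mul_sum]
    have h2 : (ℓ : ℝ) / k * ((k : ℝ) * Fintype.card V / 2 + (k : ℝ) / (2 * ℓ))
        = ℓ * Fintype.card V / 2 + 1 / 2 := by
      field_simp
    have h3 := mul_le_mul_of_nonneg_left hxE hr0
    simp only [slack]
    rw [Finset.sum_sub_distrib, h1, Finset.sum_const, nsmul_eq_mul, Finset.card_univ]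
    linarith
  have hmain := mem_convexHull_cover (inc := inc) (ℓ := ℓ) (y := y)
    (b := fun v => (Finset.univ.filter fun h => inc h = v).card - ℓ)
    (fun v => by have := hdegk v; omega) (fun v => by have := hdegk v; omega)
    hy0 (fun e => (hyk e).trans hr1) hslack htot (fun S h1 h2 F => by
      rw [← hcutS]
      exact one_le_cut_sum hℓ1 hℓk' y hy0 hyk _ F (hycut S h1 h2))
  refine convexHull_mono ?_ hmain
  rintro χ ⟨I, hI, rfl⟩
  refine ⟨I, fun v => (hI v).trans ?_, rfl⟩
  refine Finset.card_le_card_of_injOn Prod.fst ?_ ?_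
  · rintro ⟨e, β⟩ h
    obtain ⟨rfl, h2⟩ := (Finset.mem_filter.1 h).2
    refine Finset.mem_coe.2 (Finset.mem_filter.2 ⟨h2, ?_⟩)
    rw [hends e, Sym2.mem_iff]
    cases β <;> simp
  · rintro ⟨e, β⟩ h ⟨e', β'⟩ h' (rfl : e = e')
    have h1 := (Finset.mem_filter.1 h).2.1
    have h2 := (Finset.mem_filter.1 h').2.1
    have := hne e
    cases β <;> cases β' <;> simp_all
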